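/- Let H be a real Banach space, F : H → H, p ≥ 1 a natural number, and S : ℝ × H → H a jointly Fréchet differentiable self-adjoint map (S(−t,S(t,u)) = u for all t, u). Define Ds(t,u) = ∂₁S(t,u) − (1/2)(F(S(t,u)) + D₂S(t,u)(F(u))) and the corrected scheme Ŝ(t,u) = S(t,u) − (t/(p+1))·Ds(t,u). Assume there exist constants t* > 0 and C₁, C₂, L ≥ 0 such that for all |t| ≤ t* and all u, v ∈ H: (i) ‖Ds(t,u)‖ ≤ C₁|t|^p; (ii) ‖Ds(t,u) − Ds(t,v)‖ ≤ C₂|t|^p·‖u−v‖; (iii) ‖S(t,u) − S(t,v) − D₂S(t,v)(u−v)‖ ≤ (L/2)‖u−v‖². Then there exist constants C ≥ 0 and t₁ > 0 such that for all |t| ≤ t₁ and all u₀ ∈ H, ‖Ŝ(−t, Ŝ(t,u₀)) − u₀‖ ≤ C·|t|^{2p+2}, i.e. the corrected scheme is self-adjoint up to O(t^{2p+2}). -/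

import Mathlib

/-!
Differentiating `S (-t) (S t u) = u` in `t` and in `u` shows that `D₂S(-t, S(t,u))` carries
`∂₁S(t,u)` to `∂₁S(-t, S(t,u))` and is a left inverse of `D₂S(t,u)`. These two facts swap the terms
of the symmetrized defect, so `Ds(-t, S(t,u)) = D₂S(-t, S(t,u)) Ds(t,u)`. The corrections in
`Ŝ(t, ·)` and `Ŝ(-t, ·)` have opposite signs and therefore cancel to first order; what is left is
the Taylor remainder of `S(-t, ·)` plus a Lipschitz increment of the defect over the distance
`‖Ŝ(t,u) - S(t,u)‖ = O(t^{p+1})`, both of which are `O(t^{2p+2})`.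
-/

open Function
open scoped Topology

section Calculus

variable {𝕜 E G : Type*} [NontriviallyNormedField 𝕜]
  [NormedAddCommGroup E] [NormedSpace 𝕜 E] [NormedAddCommGroup G] [NormedSpace 𝕜 G]

lemma fderiv_apply_fderiv_of_eventually_leftInverse {f : E → G} {g : G → E} {x : E}
    (hg : DifferentiableAt 𝕜 g (f x)) (hf : DifferentiableAt 𝕜 f x)
    (hgf : ∀ᶠ z in 𝓝 x, g (f z) = z) (y : E) :
    fderiv 𝕜 g (f x) (fderiv 𝕜 f x y) = y := by
  have hcomp : HasFDerivAt id (fderiv 𝕜 g (f x) ∘L fderiv 𝕜 f x) x :=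
    (hg.hasFDerivAt.comp x hf.hasFDerivAt).congr_of_eventuallyEq (hgf.mono fun _ hz => hz.symm)
  exact DFunLike.congr_fun (hcomp.unique (hasFDerivAt_id x)) y

lemma fderiv_uncurry_apply {f : 𝕜 → E → G} {t : 𝕜} {x : E}
    (hf : DifferentiableAt 𝕜 (uncurry f) (t, x)) (s : 𝕜) (y : E) :
    fderiv 𝕜 (uncurry f) (t, x) (s, y) = s • deriv (f · x) t + fderiv 𝕜 (f t) x y := by
  have htime : HasDerivAt (f · x) (fderiv 𝕜 (uncurry f) (t, x) (1, 0)) t :=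
    hf.hasFDerivAt.comp_hasDerivAt (f := (·, x)) t
      ((hasDerivAt_id t).prodMk (hasDerivAt_const t x))
  have hspace : HasFDerivAt (f t)
      (fderiv 𝕜 (uncurry f) (t, x) ∘L ContinuousLinearMap.inr 𝕜 𝕜 E) x :=
    hf.hasFDerivAt.comp x (hasFDerivAt_prodMk_right t x)
  rw [htime.deriv, hspace.fderiv, ← map_smul, ContinuousLinearMap.comp_apply,
    ContinuousLinearMap.inr_apply, ← map_add]
  simp

lemma norm_add_smul_sub_le_of_apply_eq {g d : E → G} {g' : E →L[𝕜] G} {v e : E} {a : 𝕜}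
    {K M : ℝ} (hde : d v = g' e)
    (hg : ‖g (v - a • e) - g v - g' (v - a • e - v)‖ ≤ K * ‖v - a • e - v‖ ^ 2)
    (hd : ‖d (v - a • e) - d v‖ ≤ M * ‖v - a • e - v‖) :
    ‖g (v - a • e) + a • d (v - a • e) - g v‖ ≤ (K * ‖e‖ ^ 2 + M * ‖e‖) * ‖a‖ ^ 2 := by
  set w := v - a • e
  have hwv : w - v = -(a • e) := by simp [w]
  have hnorm : ‖w - v‖ = ‖a‖ * ‖e‖ := by rw [hwv, norm_neg, norm_smul]
  have hsplit : g w + a • d w - g v = (g w - g v - g' (w - v)) + a • (d w - d v) := by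
    rw [hwv, map_neg, map_smul, ← hde, smul_sub]
    abel
  calc ‖g w + a • d w - g v‖
      ≤ ‖g w - g v - g' (w - v)‖ + ‖a‖ * ‖d w - d v‖ := by
        rw [hsplit, ← norm_smul]
        exact norm_add_le _ _
    _ ≤ K * ‖w - v‖ ^ 2 + ‖a‖ * (M * ‖w - v‖) := by gcongr
    _ = (K * ‖e‖ ^ 2 + M * ‖e‖) * ‖a‖ ^ 2 := by rw [hnorm]; ring

end Calculus

/-- A one-step scheme `S`, with step size `t` and state `u`, is self-adjoint (time-reversible) if
a step of size `-t` undoes a step of size `t`. -/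
def IsSelfAdjointScheme {T X : Type*} [Neg T] (S : T → X → X) : Prop :=
  ∀ t u, S (-t) (S t u) = u

/-- The symmetrized defect `Ds` of a one-step scheme `S` for the equation `u' = F u`: the failure
of `∂₁S(t,u)` to be the average of `F (S(t,u))` and `D₂S(t,u) (F u)`, both of which it equals for
the exact flow. It is meaningful only where `S` is differentiable, as `deriv` and `fderiv` vanish
elsewhere. -/
noncomputable def symmetrizedDefect {𝕜 E : Type*} [RCLike 𝕜] [NormedAddCommGroup E]
    [NormedSpace 𝕜 E] (F : E → E) (S : 𝕜 → E → E) (t : 𝕜) (u : E) : E :=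
  deriv (S · u) t - (1 / 2 : 𝕜) • (F (S t u) + fderiv 𝕜 (S t) u (F u))

/-- The scheme `Ŝ` obtained from a scheme `S` of order `p` by subtracting the leading part
`t / (p + 1) • Ds(t,u)` of its local error, as estimated by the symmetrized defect. -/
noncomputable def correctedScheme {𝕜 E : Type*} [RCLike 𝕜] [NormedAddCommGroup E]
    [NormedSpace 𝕜 E] (F : E → E) (S : 𝕜 → E → E) (p : ℕ) (t : 𝕜) (u : E) : E :=
  S t u - (t / ((p : 𝕜) + 1)) • symmetrizedDefect F S t u

namespace IsSelfAdjointScheme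

lemma fderiv_neg_apply_deriv {𝕜 E : Type*} [NontriviallyNormedField 𝕜] [NormedAddCommGroup E]
    [NormedSpace 𝕜 E] {S : 𝕜 → E → E} {t : 𝕜} {u : E} (hsym : IsSelfAdjointScheme S)
    (hS : DifferentiableAt 𝕜 (uncurry S) (-t, S t u)) (ht : DifferentiableAt 𝕜 (S · u) t) :
    fderiv 𝕜 (S (-t)) (S t u) (deriv (S · u) t) = deriv (S · (S t u)) (-t) := by
  have hcomp : HasDerivAt (fun τ => S (-τ) (S τ u))
      (fderiv 𝕜 (uncurry S) (-t, S t u) (-1, deriv (S · u) t)) t :=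
    hS.hasFDerivAt.comp_hasDerivAt (f := fun τ => (-τ, S τ u)) t
      ((hasDerivAt_neg t).prodMk ht.hasDerivAt)
  simp only [hsym _ u] at hcomp
  have hzero := hcomp.unique (hasDerivAt_const t u)
  rw [fderiv_uncurry_apply hS, neg_one_smul, neg_add_eq_zero] at hzero
  exact hzero.symm

variable {𝕜 E : Type*} [RCLike 𝕜] [NormedAddCommGroup E] [NormedSpace 𝕜 E]
  {S : 𝕜 → E → E} {t : 𝕜} {u : E}

lemma symmetrizedDefect_neg (hsym : IsSelfAdjointScheme S) (F : E → E)
    (hS : DifferentiableAt 𝕜 (uncurry S) (t, u))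
    (hS_neg : DifferentiableAt 𝕜 (uncurry S) (-t, S t u)) :
    symmetrizedDefect F S (-t) (S t u)
      = fderiv 𝕜 (S (-t)) (S t u) (symmetrizedDefect F S t u) := by
  have htime : DifferentiableAt 𝕜 (S · u) t :=
    hS.comp (f := (·, u)) t (by fun_prop)
  have hspace : DifferentiableAt 𝕜 (S t) u :=
    hS.comp u (by fun_prop)
  have hspace_neg : DifferentiableAt 𝕜 (S (-t)) (S t u) :=
    hS_neg.comp (S t u) (by fun_prop)
  simp only [symmetrizedDefect, map_sub, map_smul, map_add, hsym t u,
    hsym.fderiv_neg_apply_deriv hS_neg htime,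
    fderiv_apply_fderiv_of_eventually_leftInverse hspace_neg hspace (.of_forall (hsym t))]
  rw [add_comm (F u)]

theorem norm_correctedScheme_neg_sub_le {F : E → E} {p : ℕ} {K C₁ C₂ : ℝ}
    (hsym : IsSelfAdjointScheme S) (hS : DifferentiableAt 𝕜 (uncurry S) (t, u))
    (hS_neg : DifferentiableAt 𝕜 (uncurry S) (-t, S t u)) (hK : 0 ≤ K) (hC₂ : 0 ≤ C₂)
    (hsmall : ‖symmetrizedDefect F S t u‖ ≤ C₁ * ‖t‖ ^ p)
    (hlip : ∀ w, ‖symmetrizedDefect F S (-t) w - symmetrizedDefect F S (-t) (S t u)‖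
      ≤ C₂ * ‖t‖ ^ p * ‖w - S t u‖)
    (htaylor : ∀ w, ‖S (-t) w - S (-t) (S t u) - fderiv 𝕜 (S (-t)) (S t u) (w - S t u)‖
      ≤ K * ‖w - S t u‖ ^ 2) :
    ‖correctedScheme F S p (-t) (correctedScheme F S p t u) - u‖
      ≤ (K * C₁ ^ 2 + C₂ * C₁) * ‖t‖ ^ (2 * p + 2) := by
  set e := symmetrizedDefect F S t u
  set a : 𝕜 := t / ((p : 𝕜) + 1) with ha
  have ha_le : ‖a‖ ≤ ‖t‖ := by
    rw [ha, norm_div, ← Nat.cast_succ, RCLike.norm_natCast]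
    exact div_le_self (norm_nonneg t) (mod_cast p.succ_pos)
  have hback : correctedScheme F S p (-t) (correctedScheme F S p t u) - u
      = S (-t) (S t u - a • e) + a • symmetrizedDefect F S (-t) (S t u - a • e)
        - S (-t) (S t u) := by
    simp only [correctedScheme, neg_div, neg_smul, sub_neg_eq_add, hsym t u, a, e]
  calc ‖correctedScheme F S p (-t) (correctedScheme F S p t u) - u‖
      ≤ (K * ‖e‖ ^ 2 + C₂ * ‖t‖ ^ p * ‖e‖) * ‖a‖ ^ 2 :=
        hback ▸ norm_add_smul_sub_le_of_apply_eq (hsym.symmetrizedDefect_neg F hS hS_neg)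
          (htaylor _) (hlip _)
    _ ≤ (K * ‖e‖ ^ 2 + C₂ * ‖t‖ ^ p * ‖e‖) * ‖t‖ ^ 2 := by gcongr
    _ ≤ (K * (C₁ * ‖t‖ ^ p) ^ 2 + C₂ * ‖t‖ ^ p * (C₁ * ‖t‖ ^ p)) * ‖t‖ ^ 2 := by gcongr
    _ = (K * C₁ ^ 2 + C₂ * C₁) * ‖t‖ ^ (2 * p + 2) := by ring

end IsSelfAdjointScheme

/-- The corrected scheme `Ŝ(t,u) = S(t,u) - (t/(p+1)) Ds(t,u)` built from a self-adjoint
scheme `S` and its symmetrized defect `Ds` is self-adjoint up to `O(t^{2p+2})`: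
`‖Ŝ(-t, Ŝ(t,u₀)) - u₀‖ ≤ C |t|^{2p+2}` for small `|t|`. -/
theorem corrected_scheme_almost_selfadjoint
    {H : Type*} [NormedAddCommGroup H] [NormedSpace ℝ H]
    (F : H → H) (p : ℕ) (hp : 1 ≤ p)
    (S : ℝ → H → H) (S₁ : ℝ → H → H) (DS : ℝ → H → (H →L[ℝ] H))
    (hS : Differentiable ℝ (fun q : ℝ × H => S q.1 q.2))
    (hS₁ : ∀ t u, HasDerivAt (fun τ => S τ u) (S₁ t u) t)
    (hDS : ∀ t u, HasFDerivAt (S t) (DS t u) u)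
    (hsym : ∀ t u, S (-t) (S t u) = u)
    (Ds : ℝ → H → H)
    (hDs : ∀ t u, Ds t u = S₁ t u - (1/2 : ℝ) • (F (S t u) + DS t u (F u)))
    (Shat : ℝ → H → H)
    (hShat : ∀ t u, Shat t u = S t u - (t / ((p : ℝ) + 1)) • Ds t u)
    (tstar C₁ C₂ L : ℝ) (htstar : 0 < tstar)
    (hC₁ : 0 ≤ C₁) (hC₂ : 0 ≤ C₂) (hL : 0 ≤ L)
    (hb1 : ∀ t u, |t| ≤ tstar → ‖Ds t u‖ ≤ C₁ * |t| ^ p)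
    (hb2 : ∀ t u v, |t| ≤ tstar → ‖Ds t u - Ds t v‖ ≤ C₂ * |t| ^ p * ‖u - v‖)
    (hb3 : ∀ t u v, |t| ≤ tstar →
      ‖S t u - S t v - DS t v (u - v)‖ ≤ (L / 2) * ‖u - v‖ ^ 2) :
    ∃ C ≥ (0 : ℝ), ∃ t₁ > (0 : ℝ), ∀ t u₀, |t| ≤ t₁ →
      ‖Shat (-t) (Shat t u₀) - u₀‖ ≤ C * |t| ^ (2 * p + 2) := by
  obtain rfl : S₁ = fun t u => deriv (S · u) t :=
    funext₂ fun t u => (hS₁ t u).deriv.symm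
  obtain rfl : DS = fun t u => fderiv ℝ (S t) u :=
    funext₂ fun t u => (hDS t u).fderiv.symm
  obtain rfl : Ds = symmetrizedDefect F S := funext₂ hDs
  obtain rfl : Shat = correctedScheme F S p := funext₂ hShat
  refine ⟨L / 2 * C₁ ^ 2 + C₂ * C₁, by positivity, tstar, htstar, fun t u₀ ht => ?_⟩
  have ht_neg : |-t| ≤ tstar := by rwa [abs_neg]
  have hlip (w : H) := hb2 (-t) w (S t u₀) ht_neg
  rw [abs_neg] at hlip
  exact IsSelfAdjointScheme.norm_correctedScheme_neg_sub_le hsym (hS _) (hS _) (by positivity) hC₂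
    (hb1 t u₀ ht) hlip fun w => hb3 (-t) w (S t u₀) ht_neg
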